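/- arXiv:2409.11774 — 2 statements merged into one kernel-verified Lean document; each statement's English description precedes it below -/
import Mathlib

section
/- Let f(w) = w²/2 be the Burgers flux and let w₀ ≥ 0 be a real number. Define E(w₀) = { w ∈ ℝ : for every pair (η, ξ) of differentiable functions ℝ → ℝ with η convex and ξ′(s) = η′(s)·s for all s, one has ξ(w) − ξ(w₀) − η′(w₀)·(w²/2 − w₀²/2) ≤ 0 }. Then E(w₀) = (−∞, −w₀] ∪ {w₀}. -/
/-!
Let `f` be a `C¹` flux. For a `C²` entropy, integration by parts turns the boundary entropy
inequality into
`ξ w - ξ w₀ - η' w₀ * (f w - f w₀) = ∫ s in w₀..w, η'' s * (f w - f s)`.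
Since `η'' ≥ 0`, the inequality holds for all such entropies as soon as
`(w - w₀) * (f w - f k) ≤ 0` for every `k` between `w₀` and `w`; conversely, the choice
`η'' s = max ((w - w₀) * (f w - f s)) 0` makes the right-hand side strictly positive whenever this
sign condition fails. An entropy which is merely differentiable is reached by replacing `η'` with
the difference quotients of `η`.
-/

open Set Filter MeasureTheory
open scoped Topology Interval

/-- An entropy pair in the sense of Lax for the scalar flux `f`: a convex entropy `η` together
with an entropy flux `ξ` satisfying `ξ' = η' f'`. -/
structure IsEntropyPair (f η ξ : ℝ → ℝ) : Prop where
  convexOn : ConvexOn ℝ univ η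
  differentiable_entropy : Differentiable ℝ η
  differentiable_flux : Differentiable ℝ ξ
  deriv_flux : ∀ s, deriv ξ s = deriv η s * deriv f s

/-- The entropy boundary set `E(w₀)` of Dubois and Le Floch for the scalar flux `f`: the states
`w` satisfying the boundary entropy inequality with datum `w₀` for every entropy pair. -/
def entropyBoundarySet (f : ℝ → ℝ) (w₀ : ℝ) : Set ℝ :=
  {w | ∀ η ξ, IsEntropyPair f η ξ → ξ w - ξ w₀ - deriv η w₀ * (f w - f w₀) ≤ 0}

section Integral

variable {a b : ℝ} {f g : ℝ → ℝ}

lemma integral_nonpos_of_sub_mul_nonpos (hg : ∀ s ∈ [[a, b]], (b - a) * g s ≤ 0) :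
    ∫ s in a..b, g s ≤ 0 := by
  rcases lt_trichotomy a b with hab | rfl | hab
  · rw [uIcc_of_le hab.le] at hg
    have hneg : 0 ≤ ∫ s in a..b, -g s := intervalIntegral.integral_nonneg hab.le fun s hs ↦
      neg_nonneg.2 <| nonpos_of_mul_nonpos_right (hg s hs) (sub_pos.2 hab)
    rwa [intervalIntegral.integral_neg, neg_nonneg] at hneg
  · exact intervalIntegral.integral_same.le
  · rw [uIcc_of_ge hab.le] at hg
    rw [intervalIntegral.integral_symm, neg_nonpos]
    exact intervalIntegral.integral_nonneg hab.le fun s hs ↦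
      nonneg_of_mul_nonpos_right (hg s hs) (sub_neg.2 hab)

lemma integral_pos_of_sub_mul_nonneg (hgc : ContinuousOn g [[a, b]])
    (hg : ∀ s ∈ [[a, b]], 0 ≤ (b - a) * g s) (hpos : ∃ k ∈ [[a, b]], 0 < (b - a) * g k) :
    0 < ∫ s in a..b, g s := by
  obtain ⟨k, hk, hgk⟩ := hpos
  rcases lt_trichotomy a b with hab | rfl | hab
  · rw [uIcc_of_le hab.le] at hgc hg hk
    have hba := sub_pos.2 hab
    exact intervalIntegral.integral_pos hab hgc
      (fun s hs ↦ nonneg_of_mul_nonneg_right (hg s (Ioc_subset_Icc_self hs)) hba)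
      ⟨k, hk, (mul_pos_iff_of_pos_left hba).1 hgk⟩
  · simp at hgk
  · rw [uIcc_of_ge hab.le] at hgc hg hk
    have hba := sub_neg.2 hab
    have hneg : 0 < ∫ s in b..a, -g s := intervalIntegral.integral_pos hab hgc.neg
      (fun s hs ↦ neg_nonneg.2 (nonpos_of_mul_nonneg_right (hg s (Ioc_subset_Icc_self hs)) hba))
      ⟨k, hk, neg_pos.2 (neg_of_mul_pos_right hgk hba.le)⟩
    rwa [intervalIntegral.integral_neg, ← intervalIntegral.integral_symm] at hneg

lemma integral_mul_deriv_sub_mul_sub_eq {f' u u' : ℝ → ℝ}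
    (hu : ∀ s ∈ [[a, b]], HasDerivAt u (u' s) s) (hf : ∀ s ∈ [[a, b]], HasDerivAt f (f' s) s)
    (hu' : IntervalIntegrable u' volume a b) (hf' : IntervalIntegrable f' volume a b) :
    (∫ s in a..b, u s * f' s) - u a * (f b - f a) = ∫ s in a..b, u' s * (f b - f s) := by
  rw [intervalIntegral.integral_mul_deriv_eq_deriv_mul hu
    (fun s hs ↦ (hf s hs).sub_const (f b)) hu' hf']
  have hneg (s : ℝ) : u' s * (f s - f b) = -(u' s * (f b - f s)) := by ring
  simp only [hneg, intervalIntegral.integral_neg]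
  ring

lemma integral_mul_deriv_sub_mul_sub_nonpos {f' u u' : ℝ → ℝ}
    (hu : ∀ s ∈ [[a, b]], HasDerivAt u (u' s) s) (hf : ∀ s ∈ [[a, b]], HasDerivAt f (f' s) s)
    (hu' : IntervalIntegrable u' volume a b) (hf' : IntervalIntegrable f' volume a b)
    (hu'_nonneg : ∀ s ∈ [[a, b]], 0 ≤ u' s)
    (hsign : ∀ s ∈ [[a, b]], (b - a) * (f b - f s) ≤ 0) :
    (∫ s in a..b, u s * f' s) - u a * (f b - f a) ≤ 0 := by
  rw [integral_mul_deriv_sub_mul_sub_eq hu hf hu' hf']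
  refine integral_nonpos_of_sub_mul_nonpos fun s hs ↦ ?_
  rw [mul_left_comm]
  exact mul_nonpos_of_nonneg_of_nonpos (hu'_nonneg s hs) (hsign s hs)

end Integral

section ConvexOn

variable {η g : ℝ → ℝ}

lemma monotone_deriv_of_convexOn (hc : ConvexOn ℝ univ η) (hd : Differentiable ℝ η) :
    Monotone (deriv η) :=
  monotoneOn_univ.1 (hc.monotoneOn_deriv fun s _ ↦ hd s)

lemma deriv_le_inv_mul_sub {s h : ℝ} (hc : ConvexOn ℝ univ η) (hd : DifferentiableAt ℝ η s)
    (hh : 0 < h) : deriv η s ≤ h⁻¹ * (η (s + h) - η s) := by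
  simpa [slope] using hc.deriv_le_slope (mem_univ s) (mem_univ (s + h)) (by linarith) hd

lemma inv_mul_sub_le_deriv {s h : ℝ} (hc : ConvexOn ℝ univ η)
    (hd : DifferentiableAt ℝ η (s + h)) (hh : 0 < h) :
    h⁻¹ * (η (s + h) - η s) ≤ deriv η (s + h) := by
  simpa [slope] using hc.slope_le_deriv (mem_univ s) (mem_univ (s + h)) (by linarith) hd

lemma tendsto_integral_inv_mul_sub_mul (hc : ConvexOn ℝ univ η) (hd : Differentiable ℝ η)
    {a b : ℝ} (hg : ContinuousOn g [[a, b]]) :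
    Tendsto (fun h ↦ ∫ s in a..b, h⁻¹ * (η (s + h) - η s) * g s) (𝓝[>] 0)
      (𝓝 (∫ s in a..b, deriv η s * g s)) := by
  have hmono := monotone_deriv_of_convexOn hc hd
  refine intervalIntegral.tendsto_integral_filter_of_dominated_convergence
    (fun s ↦ (|deriv η s| + |deriv η (s + 1)|) * |g s|) ?_ ?_ ?_ ?_
  · refine Eventually.of_forall fun h ↦ ?_
    have hcont : Continuous fun s ↦ h⁻¹ * (η (s + h) - η s) := by
      have hη := hd.continuous
      fun_prop
    exact (intervalIntegrable_iff.1
      (hcont.continuousOn.mul hg).intervalIntegrable).aestronglyMeasurable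
  · filter_upwards [Ioo_mem_nhdsGT one_pos] with h ⟨hh₀, hh₁⟩
    refine Eventually.of_forall fun s _ ↦ ?_
    rw [norm_mul, Real.norm_eq_abs, Real.norm_eq_abs]
    gcongr
    calc |h⁻¹ * (η (s + h) - η s)| ≤ max |deriv η s| |deriv η (s + 1)| :=
          abs_le_max_abs_abs (deriv_le_inv_mul_sub hc (hd s) hh₀)
            ((inv_mul_sub_le_deriv hc (hd (s + h)) hh₀).trans (hmono (by linarith)))
      _ ≤ |deriv η s| + |deriv η (s + 1)| :=
          max_le_add_of_nonneg (abs_nonneg _) (abs_nonneg _)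
  · have hmono_shift : Monotone fun s ↦ deriv η (s + 1) := fun s t hst ↦ hmono (by linarith)
    exact (hmono.intervalIntegrable.abs.add hmono_shift.intervalIntegrable.abs).mul_continuousOn
      hg.abs
  · exact Eventually.of_forall fun s _ ↦
      ((hd s).hasDerivAt.tendsto_slope_zero_right).mul_const (g s)

end ConvexOn

section EntropyBoundarySet

variable {f η ξ u : ℝ → ℝ} {w₀ w : ℝ}

lemma IsEntropyPair.integral_eq_sub (h : IsEntropyPair f η ξ) (hf : Continuous (deriv f))
    (a b : ℝ) : ∫ s in a..b, deriv η s * deriv f s = ξ b - ξ a := by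
  have hmono := monotone_deriv_of_convexOn h.convexOn h.differentiable_entropy
  exact intervalIntegral.integral_eq_sub_of_hasDerivAt
    (fun s _ ↦ h.deriv_flux s ▸ (h.differentiable_flux s).hasDerivAt)
    (hmono.intervalIntegrable.mul_continuousOn hf.continuousOn)

lemma isEntropyPair_integral (hf : Continuous (deriv f)) (hu : Continuous u)
    (hmono : Monotone u) (a : ℝ) :
    IsEntropyPair f (fun s ↦ ∫ t in a..s, u t) (fun s ↦ ∫ t in a..s, u t * deriv f t) := by
  have hη (s : ℝ) := (hu.integral_hasStrictDerivAt a s).hasDerivAt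
  have hξ (s : ℝ) : HasDerivAt (fun s ↦ ∫ t in a..s, u t * deriv f t) (u s * deriv f s) s :=
    ((hu.mul hf).integral_hasStrictDerivAt a s).hasDerivAt
  refine ⟨Monotone.convexOn_univ_of_deriv (fun s ↦ (hη s).differentiableAt) ?_,
    fun s ↦ (hη s).differentiableAt, fun s ↦ (hξ s).differentiableAt, fun s ↦ ?_⟩
  · rwa [funext fun s ↦ (hη s).deriv]
  · rw [(hξ s).deriv, (hη s).deriv]

lemma mem_entropyBoundarySet_of_sub_mul_sub_nonpos (hf : ContDiff ℝ 1 f)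
    (hw : ∀ k ∈ [[w₀, w]], (w - w₀) * (f w - f k) ≤ 0) : w ∈ entropyBoundarySet f w₀ := by
  intro η ξ h
  have hc := h.convexOn
  have hd := h.differentiable_entropy
  have hmono := monotone_deriv_of_convexOn hc hd
  have hf' := hf.continuous_deriv le_rfl
  have hlim := (tendsto_integral_inv_mul_sub_mul hc hd (a := w₀) (b := w) hf'.continuousOn).sub
    ((hd w₀).hasDerivAt.tendsto_slope_zero_right.mul_const (f w - f w₀))
  simp only [h.integral_eq_sub hf', smul_eq_mul] at hlim
  refine le_of_tendsto hlim ?_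
  filter_upwards [self_mem_nhdsWithin] with t (ht : 0 < t)
  have hquot (s : ℝ) : HasDerivAt (fun s ↦ t⁻¹ * (η (s + t) - η s))
      (t⁻¹ * (deriv η (s + t) - deriv η s)) s :=
    (((hd (s + t)).hasDerivAt.comp_add_const s t).sub (hd s).hasDerivAt).const_mul t⁻¹
  have hmono_shift : Monotone fun s ↦ deriv η (s + t) := fun r s hrs ↦ hmono (by linarith)
  have hint : IntervalIntegrable (fun s ↦ t⁻¹ * (deriv η (s + t) - deriv η s)) volume w₀ w :=
    (hmono_shift.intervalIntegrable.sub hmono.intervalIntegrable).const_mul t⁻¹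
  have hquot_nonneg (s : ℝ) : 0 ≤ t⁻¹ * (deriv η (s + t) - deriv η s) :=
    mul_nonneg (inv_nonneg.2 ht.le) (sub_nonneg.2 (hmono (by linarith)))
  exact integral_mul_deriv_sub_mul_sub_nonpos (fun s _ ↦ hquot s)
    (fun s _ ↦ (hf.differentiable one_ne_zero s).hasDerivAt) hint (hf'.intervalIntegrable _ _)
    (fun s _ ↦ hquot_nonneg s) hw

lemma sub_mul_sub_nonpos_of_mem_entropyBoundarySet (hf : ContDiff ℝ 1 f)
    (hw : w ∈ entropyBoundarySet f w₀) {k : ℝ} (hk : k ∈ [[w₀, w]]) :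
    (w - w₀) * (f w - f k) ≤ 0 := by
  by_contra! hpos
  let m : ℝ → ℝ := fun s ↦ max ((w - w₀) * (f w - f s)) 0
  have hm : Continuous m := by
    have hf_cont := hf.continuous
    fun_prop
  have hm_nonneg (s : ℝ) : 0 ≤ m s := le_max_right _ _
  let u : ℝ → ℝ := fun s ↦ ∫ t in w₀..s, m t
  have hu (s : ℝ) : HasDerivAt u (m s) s := (hm.integral_hasStrictDerivAt w₀ s).hasDerivAt
  have hu_cont : Continuous u := continuous_iff_continuousAt.2 fun s ↦ (hu s).continuousAt
  have hu_mono : Monotone u := monotone_of_hasDerivAt_nonneg hu hm_nonneg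
  have hdissipation : ∫ s in w₀..w, m s * (f w - f s) ≤ 0 := by
    have hf' := hf.continuous_deriv le_rfl
    rw [← integral_mul_deriv_sub_mul_sub_eq (fun s _ ↦ hu s)
      (fun s _ ↦ (hf.differentiable one_ne_zero s).hasDerivAt) (hm.intervalIntegrable _ _)
      (hf'.intervalIntegrable _ _)]
    have hpair := hw _ _ (isEntropyPair_integral hf' hu_cont hu_mono w₀)
    rwa [intervalIntegral.integral_same, sub_zero, hu_cont.deriv_integral] at hpair
  have hsq (s : ℝ) : (w - w₀) * (m s * (f w - f s)) = m s ^ 2 := by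
    rcases max_cases ((w - w₀) * (f w - f s)) 0 with ⟨h, -⟩ | ⟨h, -⟩ <;>
      simp only [m, h] <;> ring
  refine hdissipation.not_gt (integral_pos_of_sub_mul_nonneg ?_ (fun s _ ↦ ?_) ⟨k, hk, ?_⟩)
  · exact (hm.mul (continuous_const.sub hf.continuous)).continuousOn
  · exact hsq s ▸ sq_nonneg (m s)
  · exact hsq k ▸ pow_pos (lt_max_of_lt_left hpos) 2

theorem mem_entropyBoundarySet_iff (hf : ContDiff ℝ 1 f) :
    w ∈ entropyBoundarySet f w₀ ↔ ∀ k ∈ [[w₀, w]], (w - w₀) * (f w - f k) ≤ 0 :=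
  ⟨fun hw _ ↦ sub_mul_sub_nonpos_of_mem_entropyBoundarySet hf hw,
    mem_entropyBoundarySet_of_sub_mul_sub_nonpos hf⟩

end EntropyBoundarySet

section Burgers

/-- The flux of the Burgers equation. -/
noncomputable def burgersFlux (w : ℝ) : ℝ := w ^ 2 / 2

lemma contDiff_burgersFlux {n : WithTop ℕ∞} : ContDiff ℝ n burgersFlux :=
  (contDiff_id.pow 2).div_const 2

lemma deriv_burgersFlux (s : ℝ) : deriv burgersFlux s = s :=
  ((hasDerivAt_pow 2 s).div_const 2).deriv.trans (by simp)

lemma isEntropyPair_burgersFlux_iff {η ξ : ℝ → ℝ} :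
    IsEntropyPair burgersFlux η ξ ↔ ConvexOn ℝ univ η ∧ Differentiable ℝ η ∧
      Differentiable ℝ ξ ∧ ∀ s, deriv ξ s = deriv η s * s := by
  constructor
  · rintro ⟨hc, hη, hξ, hderiv⟩
    exact ⟨hc, hη, hξ, by simpa only [deriv_burgersFlux] using hderiv⟩
  · rintro ⟨hc, hη, hξ, hderiv⟩
    exact ⟨hc, hη, hξ, by simpa only [deriv_burgersFlux] using hderiv⟩

lemma burgersFlux_le_burgersFlux_iff {a b : ℝ} : burgersFlux a ≤ burgersFlux b ↔ |a| ≤ |b| := by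
  rw [← sq_le_sq, burgersFlux, burgersFlux, div_le_div_iff_of_pos_right two_pos]

lemma burgersFlux_lt_burgersFlux_iff {a b : ℝ} : burgersFlux a < burgersFlux b ↔ |a| < |b| :=
  lt_iff_lt_of_le_iff_le burgersFlux_le_burgersFlux_iff

lemma exists_sub_mul_burgersFlux_sub_pos {w₀ w : ℝ} (hlt : -max w₀ 0 < w) (hne : w ≠ w₀) :
    ∃ k ∈ [[w₀, w]], 0 < (w - w₀) * (burgersFlux w - burgersFlux k) := by
  rcases hne.lt_or_gt with hw | hw
  · have hw₀ : 0 < w₀ := by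
      rcases max_cases w₀ 0 with ⟨hmax, -⟩ | ⟨hmax, -⟩ <;> rw [hmax] at hlt <;> linarith
    rw [max_eq_left hw₀.le] at hlt
    have hflux : burgersFlux w < burgersFlux w₀ := by
      rw [burgersFlux_lt_burgersFlux_iff, abs_of_pos hw₀]
      exact abs_lt.2 ⟨hlt, hw⟩
    exact ⟨w₀, left_mem_uIcc, mul_pos_of_neg_of_neg (sub_neg.2 hw) (sub_neg.2 hflux)⟩
  · have hmax : max w₀ 0 < w := by
      rcases max_cases w₀ 0 with ⟨hmax, -⟩ | ⟨hmax, -⟩ <;> rw [hmax] at hlt ⊢ <;> linarith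
    have hflux : burgersFlux (max w₀ 0) < burgersFlux w := by
      rw [burgersFlux_lt_burgersFlux_iff, abs_of_nonneg (le_max_right w₀ 0)]
      exact hmax.trans_le (le_abs_self w)
    exact ⟨max w₀ 0, mem_uIcc_of_le (le_max_left w₀ 0) hmax.le,
      mul_pos (sub_pos.2 hw) (sub_pos.2 hflux)⟩

lemma sub_mul_burgersFlux_sub_nonpos {w₀ w k : ℝ} (hw : w ≤ -max w₀ 0) (hk : k ∈ [[w₀, w]]) :
    (w - w₀) * (burgersFlux w - burgersFlux k) ≤ 0 := by
  have hw_nonpos : w ≤ 0 := by linarith [le_max_right w₀ 0]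
  have hw_le : w ≤ -w₀ := by linarith [le_max_left w₀ 0]
  rcases le_total w w₀ with hww₀ | hww₀
  · rw [uIcc_of_ge hww₀] at hk
    have hflux : burgersFlux k ≤ burgersFlux w := by
      rw [burgersFlux_le_burgersFlux_iff, abs_of_nonpos hw_nonpos]
      exact abs_le.2 ⟨by linarith [hk.1], by linarith [hk.2]⟩
    exact mul_nonpos_of_nonpos_of_nonneg (sub_nonpos.2 hww₀) (sub_nonneg.2 hflux)
  · rw [uIcc_of_le hww₀] at hk
    have hflux : burgersFlux w ≤ burgersFlux k := by
      rw [burgersFlux_le_burgersFlux_iff]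
      exact abs_le_abs_of_nonpos hw_nonpos hk.2
    exact mul_nonpos_of_nonneg_of_nonpos (sub_nonneg.2 hww₀) (sub_nonpos.2 hflux)

lemma entropyBoundarySet_burgersFlux (w₀ : ℝ) :
    entropyBoundarySet burgersFlux w₀ = Iic (-max w₀ 0) ∪ {w₀} := by
  ext w
  rw [mem_entropyBoundarySet_iff contDiff_burgersFlux, mem_union, mem_Iic, mem_singleton_iff]
  constructor
  · intro hsign
    by_contra! ⟨hlt, hne⟩
    obtain ⟨k, hk, hpos⟩ := exists_sub_mul_burgersFlux_sub_pos hlt hne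
    exact hpos.not_ge (hsign k hk)
  · rintro (hw | rfl) k hk
    · exact sub_mul_burgersFlux_sub_nonpos hw hk
    · rw [sub_self, zero_mul]

end Burgers

theorem burgers_entropy_boundary_set_nonneg_general (w₀ : ℝ) :
    {w : ℝ | ∀ η ξ : ℝ → ℝ, ConvexOn ℝ Set.univ η → Differentiable ℝ η →
      Differentiable ℝ ξ → (∀ s, deriv ξ s = deriv η s * s) →
      ξ w - ξ w₀ - deriv η w₀ * (w ^ 2 / 2 - w₀ ^ 2 / 2) ≤ 0}
    = Set.Iic (-max w₀ 0) ∪ {w₀} := by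
  simpa only [entropyBoundarySet, isEntropyPair_burgersFlux_iff, and_imp, burgersFlux]
    using entropyBoundarySet_burgersFlux w₀

/-- For the Burgers flux `f(w) = w²/2` and boundary data `w₀ ≥ 0`, the
Dubois–Le Floch entropy boundary set equals `(-∞, -w₀] ∪ {w₀}`. -/
theorem burgers_entropy_boundary_set_nonneg
    (w₀ : ℝ) (hw₀ : 0 ≤ w₀) :
    {w : ℝ | ∀ η ξ : ℝ → ℝ, ConvexOn ℝ Set.univ η → Differentiable ℝ η →
      Differentiable ℝ ξ → (∀ s, deriv ξ s = deriv η s * s) →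
      ξ w - ξ w₀ - deriv η w₀ * (w ^ 2 / 2 - w₀ ^ 2 / 2) ≤ 0}
    = Set.Iic (-w₀) ∪ {w₀} := by
  rw [burgers_entropy_boundary_set_nonneg_general, max_eq_left hw₀]
end

section
/- Let n be a natural number, λ : Fin n → ℝ a family of wave speeds, and w₀ : Fin n → ℝ a boundary state. Define E(w₀) = { w : Fin n → ℝ : for every family η : Fin n → (ℝ → ℝ) of convex differentiable functions, ∑ⱼ λⱼ·(ηⱼ(wⱼ) − ηⱼ((w₀)ⱼ) − ηⱼ′((w₀)ⱼ)·(wⱼ − (w₀)ⱼ)) ≤ 0 }. Then E(w₀) = { w : Fin n → ℝ : for every j with λⱼ > 0, wⱼ = (w₀)ⱼ }. In particular, the entropy boundary inequality for a decoupled linear hyperbolic system is equivalent to the classical characteristic boundary condition prescribing exactly the incoming characteristic variables (with no reflection of outgoing ones). -/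
/-!
Zero is an admissible entropy, so testing with families supported on a single component decouples
the boundary inequality into `λⱼ` times a scalar relative entropy being nonpositive, for each `j`.
A relative entropy is nonnegative by convexity, so this is no constraint when `λⱼ ≤ 0`; when
`0 < λⱼ`, the quadratic entropy turns it into `(wⱼ - (w₀)ⱼ) ^ 2 ≤ 0`.
-/

/-- The relative entropy `f(b) - f(a) - f'(a) (b - a)` of the state `b` with respect to the state
`a` for the scalar entropy `f`, also known as the Bregman divergence of `f`. The derivative at `a`
is `deriv f a`, so this is meaningful only if `f` is differentiable at `a`. -/
noncomputable def relativeEntropy (f : ℝ → ℝ) (a b : ℝ) : ℝ :=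
  f b - f a - deriv f a * (b - a)

@[simp]
lemma relativeEntropy_self (f : ℝ → ℝ) (a : ℝ) : relativeEntropy f a a = 0 := by
  simp [relativeEntropy]

@[simp]
lemma relativeEntropy_zero (a b : ℝ) : relativeEntropy 0 a b = 0 := by
  simp [relativeEntropy]

lemma relativeEntropy_sq (a b : ℝ) : relativeEntropy (fun x ↦ x ^ 2) a b = (b - a) ^ 2 := by
  simp only [relativeEntropy, deriv_pow_field]
  ring

lemma relativeEntropy_nonneg {s : Set ℝ} {f : ℝ → ℝ} {a b : ℝ} (hf : ConvexOn ℝ s f)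
    (ha : a ∈ s) (hb : b ∈ s) (hfa : DifferentiableAt ℝ f a) : 0 ≤ relativeEntropy f a b := by
  suffices deriv f a * (b - a) ≤ f b - f a from sub_nonneg.2 this
  rcases lt_trichotomy a b with hab | rfl | hba
  · have hslope : deriv f a ≤ slope f a b := hf.deriv_le_slope ha hb hab hfa
    rwa [slope_def_field, le_div_iff₀ (sub_pos.2 hab)] at hslope
  · simp
  · have hslope : slope f b a ≤ deriv f a := hf.slope_le_deriv hb ha hba hfa
    rw [slope_def_field, div_le_iff₀ (sub_pos.2 hba)] at hslope
    linarith

lemma forall_mul_relativeEntropy_nonpos_iff {c a b : ℝ} :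
    (∀ f : ℝ → ℝ, ConvexOn ℝ Set.univ f ∧ Differentiable ℝ f → c * relativeEntropy f a b ≤ 0) ↔
      (0 < c → b = a) := by
  constructor
  · intro h hc
    have hsq : c * (b - a) ^ 2 ≤ 0 := by
      simpa only [relativeEntropy_sq] using h _ ⟨even_two.convexOn_pow, differentiable_pow 2⟩
    have hzero : (b - a) ^ 2 = 0 :=
      le_antisymm (nonpos_of_mul_nonpos_right hsq hc) (sq_nonneg _)
    exact sub_eq_zero.1 (sq_eq_zero_iff.1 hzero)
  · rintro h f ⟨hconv, hdiff⟩
    rcases lt_or_ge 0 c with hc | hc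
    · simp [h hc]
    · exact mul_nonpos_of_nonpos_of_nonneg hc
        (relativeEntropy_nonneg hconv (Set.mem_univ a) (Set.mem_univ b) (hdiff a))

lemma forall_sum_apply_nonpos_iff {ι M : Type*} {α : ι → Type*} [Fintype ι] [∀ i, Zero (α i)]
    [AddCommMonoid M] [Preorder M] [AddLeftMono M] {p : ∀ i, α i → Prop} {F : ∀ i, α i → M}
    (hp : ∀ i, p i 0) (hF : ∀ i, F i 0 = 0) :
    (∀ x : ∀ i, α i, (∀ i, p i (x i)) → ∑ i, F i (x i) ≤ 0) ↔ ∀ i y, p i y → F i y ≤ 0 := by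
  classical
  constructor
  · intro h j y hy
    have hsingle : ∀ i, p i (Pi.single j y i) := by
      intro i
      rcases eq_or_ne i j with rfl | hij
      · rwa [Pi.single_eq_same]
      · rw [Pi.single_eq_of_ne hij]
        exact hp i
    have hsum : ∑ i, F i (Pi.single j y i) = F j y := by
      rw [Fintype.sum_eq_single j fun i hij ↦ by rw [Pi.single_eq_of_ne hij, hF],
        Pi.single_eq_same]
    exact hsum ▸ h _ hsingle
  · exact fun h x hx ↦ Finset.sum_nonpos fun i _ ↦ h i _ (hx i)

theorem linear_system_entropy_boundary_set_general {ι : Type*} [Fintype ι] (lam w₀ : ι → ℝ) :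
    {w : ι → ℝ | ∀ η : ι → (ℝ → ℝ),
      (∀ j, ConvexOn ℝ Set.univ (η j) ∧ Differentiable ℝ (η j)) →
      ∑ j, lam j * (η j (w j) - η j (w₀ j)
        - deriv (η j) (w₀ j) * (w j - w₀ j)) ≤ 0}
    = {w : ι → ℝ | ∀ j, 0 < lam j → w j = w₀ j} := by
  ext w
  have decoupling := forall_sum_apply_nonpos_iff
    (p := fun _ f ↦ ConvexOn ℝ Set.univ f ∧ Differentiable ℝ f)
    (F := fun j f ↦ lam j * relativeEntropy f (w₀ j) (w j))
    (fun _ ↦ ⟨convexOn_const 0 convex_univ, differentiable_const 0⟩) (by simp)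
  exact decoupling.trans (forall_congr' fun _ ↦ forall_mul_relativeEntropy_nonpos_iff)

/-- For a decoupled linear hyperbolic system `∂ₜw + Λ ∂ₓw = 0` with
`Λ = diag(λ₁, …, λₙ)`, the Dubois–Le Floch entropy boundary set coincides with
the classical characteristic boundary condition: exactly the incoming
characteristic variables (those with `λⱼ > 0`) are prescribed, with no
reflection of the outgoing ones. -/
theorem linear_system_entropy_boundary_set
    (n : ℕ) (lam w₀ : Fin n → ℝ) :
    {w : Fin n → ℝ | ∀ η : Fin n → (ℝ → ℝ),
      (∀ j, ConvexOn ℝ Set.univ (η j) ∧ Differentiable ℝ (η j)) →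
      ∑ j, lam j * (η j (w j) - η j (w₀ j)
        - deriv (η j) (w₀ j) * (w j - w₀ j)) ≤ 0}
    = {w : Fin n → ℝ | ∀ j, 0 < lam j → w j = w₀ j} :=
  linear_system_entropy_boundary_set_general lam w₀
end
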